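/- Let K be a commutative ℚ-algebra and P ∈ K[X₁,…,Xₙ] homogeneous of degree 3 with (Hess P)⁴ = 0. Let Q⁽¹⁾, Q⁽²⁾, … be the Zhao sequence of P. Then Q⁽ᵐ⁾ = 0 for every m ≥ 5. -/

import Mathlib

/-!
The third derivatives of the cubic form `P` are constants, and they are the structure constants
of a commutative product on vectors of polynomials for which the dot product is an invariant form:
`B (a b) c = B a (b c)`. Writing `x = (X₁, …, Xₙ)` and `L` for multiplication by `x`, Euler's
identity says that `L` is the Hessian operator and that `y = x²` is `2 ∇P`. The hypothesis is
`L⁴ = 0`. Put `z = y²`.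

Because `x` is generic, every identity in `x` may be differentiated in an arbitrary direction `h`,
and because `B` is nondegenerate, the derivative of a scalar identity is a vector identity.
Starting from `B (L² y) y = B (L³ y) x = 0` this gives `y (L y) = 0` (`Frob.m_y_Ly`); the
derivatives of this and of `L⁴ = 0` give `y (L² y) = -L² z` and `y z = -2 L² z`, and pairing with
`y` gives `B (L² y) z = 0` and `B z z = 0`. Differentiating these again yields `L (y z) = 0`,
hence `L³ z = 0`, and `(L y) z + y (L z) = 0`; pairing with `y`, `B (L z) z = 0`. One more
derivative gives `8 L (y (L z)) + z² = 0`, whose pairing with `y` shows `B (L z) (L z) = 0`.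

In these terms the gradients of the first Zhao polynomials are `y / 2`, `L y / 2`,
`L² y / 2 + z / 8` and `L z / 8`, and the scalar identities above say that the polynomials of
index `5, 6, 7, 8` vanish. For `m ≥ 9` each term of the recursion has a factor of index at least
`5` and below `m`, so induction concludes (`Frob.main`).
-/

open MvPolynomial

/-- The Zhao sequence of `P`: `Q⁽¹⁾ = P` and for `m ≥ 2`,
`Q⁽ᵐ⁾ = (1/(2(m-1))) ∑_{k+ℓ=m, k,ℓ≥1} ∇Q⁽ᵏ⁾ ⬝ ∇Q⁽ˡ⁾`. -/
noncomputable def zhaoSeq {n : ℕ} {K : Type*} [CommRing K] [Algebra ℚ K]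
    (P : MvPolynomial (Fin n) K) : ℕ → MvPolynomial (Fin n) K
  | 0 => 0
  | 1 => P
  | m + 2 =>
      ((1 : ℚ) / (2 * (m + 1))) •
        ∑ k ∈ (Finset.Icc 1 (m + 1)).attach,
          ∑ i : Fin n,
            MvPolynomial.pderiv i (zhaoSeq P k.1) *
              MvPolynomial.pderiv i (zhaoSeq P (m + 2 - k.1))
  decreasing_by
  · exact Nat.lt_succ_of_le (Finset.mem_Icc.mp k.2).2
  · have := (Finset.mem_Icc.mp k.2).1
    omega

/-- The Hessian matrix `(DᵢDⱼP)` of a multivariate polynomial. -/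
noncomputable def hessian {n : ℕ} {K : Type*} [CommRing K]
    (P : MvPolynomial (Fin n) K) :
    Matrix (Fin n) (Fin n) (MvPolynomial (Fin n) K) :=
  Matrix.of fun i j => MvPolynomial.pderiv i (MvPolynomial.pderiv j P)

/-- A commutative algebra `(V, m)` over `R` with a nondegenerate symmetric bilinear form `B`
for which multiplication operators are self-adjoint, together with a distinguished vector `x`
whose multiplication operator has vanishing fourth power. The maps `d h` on `V` and `e h` on `R`
model the derivative in the direction `h`: they obey the Leibniz rule for `m` and `B`, and `x`
plays the role of the generic point, `d h x = h`. -/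
structure Frob (R V : Type*) [CommRing R] [AddCommGroup V] [Module R V] where
  /-- the product -/
  m : V →ₗ[R] V →ₗ[R] V
  /-- the invariant form -/
  B : V →ₗ[R] V →ₗ[R] R
  comm : ∀ a b, m a b = m b a
  symm : ∀ a b, B a b = B b a
  assoc : ∀ a b c, B (m a b) c = B a (m b c)
  nondeg : ∀ a, (∀ h, B a h = 0) → a = 0
  /-- the generic point -/
  x : V
  /-- the directional derivative of vectors -/
  d : V → V →+ V
  /-- the directional derivative of scalars -/
  e : V → R →+ R
  d_x : ∀ h, d h x = h
  d_m : ∀ h a b, d h (m a b) = m (d h a) b + m a (d h b)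
  e_B : ∀ h a b, e h (B a b) = B (d h a) b + B a (d h b)
  nil : ∀ a, m x (m x (m x (m x a))) = 0

namespace Frob

/-! ### Identities forced by `L⁴ = 0` -/

lemma cancel {R : Type*} [CommRing R] [Algebra ℚ R] (k : ℕ) (hk : k ≠ 0) {a : R} (h : (k : R) * a = 0) : a = 0 := by
  have := congrArg (fun t => (1 / k : ℚ) • t) h
  have hk' : (k : ℚ) ≠ 0 := by exact_mod_cast hk
  simpa [← nsmul_eq_mul, ← Nat.cast_smul_eq_nsmul ℚ, smul_smul, hk'] using this

variable {R V : Type*} [CommRing R] [AddCommGroup V] [Module R V] (F : Frob R V)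

/-- Multiplication by the generic point `x`; for a cubic form, this is the Hessian operator. -/
def L (a : V) : V := F.m F.x a
/-- The square `x²`; for a cubic form, this is twice the gradient. -/
def y : V := F.m F.x F.x
/-- The element `(x²)²`. -/
def z : V := F.m F.y F.y

lemma B_m (a b h) : F.B a (F.m b h) = F.B (F.m a b) h := (F.assoc a b h).symm
lemma B_L (a b) : F.B a (F.L b) = F.B (F.L a) b := by
  rw [L, L, ← F.assoc, F.comm a]
lemma L_x : F.L F.x = F.y := rfl
lemma m_yy : F.m F.y F.y = F.z := rfl
lemma L_add (a b) : F.L (a + b) = F.L a + F.L b := by simp [L]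
lemma L_zero : F.L 0 = 0 := by simp [L]
lemma L_neg (a) : F.L (-a) = -F.L a := by simp [L]
lemma L_smul (r : R) (a) : F.L (r • a) = r • F.L a := by simp [L]
lemma d_m' (h a b) : F.d h (F.m a b) = F.m b (F.d h a) + F.m a (F.d h b) := by
  rw [F.d_m, F.comm b]
lemma e_B' (h a b) : F.e h (F.B a b) = F.B b (F.d h a) + F.B a (F.d h b) := by
  rw [F.e_B, F.symm b]
lemma d_L (h a) : F.d h (F.L a) = F.m a h + F.L (F.d h a) := by simp [L, F.d_m', F.d_x]
lemma d_y (h) : F.d h F.y = (2 : R) • F.L h := by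
  simp [y, L, F.d_m', F.d_x, two_smul]
lemma d_z (h) : F.d h F.z = (4 : R) • F.m F.y (F.L h) := by
  simp [z, F.d_m', F.d_y]; module
lemma nil' (a) : F.L (F.L (F.L (F.L a))) = 0 := F.nil a
lemma L3y : F.L (F.L (F.L F.y)) = 0 := F.nil F.x
/-- The derivative of `L⁴ a = 0` in the direction `h`. -/
lemma dnil (h a) : F.m (F.L (F.L (F.L a))) h + F.L (F.m (F.L (F.L a)) h)
    + F.L (F.L (F.m (F.L a) h)) + F.L (F.L (F.L (F.m a h))) = 0 := by
  have := congrArg (F.d h) (F.nil' a)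
  rw [map_zero] at this
  simp only [d_L, L_add] at this
  simp only [nil', add_zero] at this
  rw [← this]; abel

lemma e_zero {r : R} (hr : r = 0) (h : V) : F.e h r = 0 := by rw [hr, map_zero]
lemma d_zero {v : V} (hv : v = 0) (h : V) : F.d h v = 0 := by rw [hv, map_zero]

lemma B_LLy_y : F.B (F.L (F.L F.y)) F.y = 0 := by
  rw [← F.L_x, F.B_L, F.L_x, L3y, map_zero, LinearMap.zero_apply]

section Rat
variable [Algebra ℚ R]

/-- The derivative of `B (L² y) y = 0`. -/
lemma m_y_Ly : F.m F.y (F.L F.y) = 0 := by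
  apply F.nondeg
  intro h
  have h1 := F.e_zero F.B_LLy_y h
  simp only [e_B', d_L, d_y, L_add, L_smul, map_add, map_smul, smul_eq_mul,
    B_L, B_m, L3y, map_zero, LinearMap.zero_apply] at h1
  rw [F.comm (F.L F.y)] at h1
  refine cancel 2 two_ne_zero ?_
  push_cast
  linear_combination h1

/-- The linearization of `L⁴ = 0` in the direction `y`, applied to `x`. -/
lemma m_y_LLy_add : F.m F.y (F.L (F.L F.y)) + F.L (F.L F.z) = 0 := by
  have := F.dnil F.y F.x
  have e : F.m F.x F.y = F.L F.y := rfl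
  rw [L_x, F.comm _ F.y, F.comm _ F.y, m_y_Ly, e, nil', m_yy] at this
  simpa [L_zero] using this

/-- The derivative of `y (L y) = 0` in the direction `h`. -/
lemma d_m_y_Ly (h) : (2 : R) • F.m (F.L F.y) (F.L h) + F.m F.y (F.m F.y h)
    + (2 : R) • F.m F.y (F.L (F.L h)) = 0 := by
  have := F.d_zero F.m_y_Ly h
  simp only [d_m', d_L, d_y, L_smul, map_add, map_smul] at this
  rw [← this]; abel

/-- Obtained by pairing the derivative of `y (L y) = 0` with `y`. -/
lemma m_y_z_add : F.m F.y F.z + (2 : R) • F.L (F.L F.z) = 0 := by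
  apply F.nondeg
  intro h
  have h1 := congrArg (F.B F.y) (F.d_m_y_Ly h)
  simp only [map_add, map_smul, B_m, m_y_Ly, B_L, map_zero, m_yy,
    LinearMap.zero_apply, smul_zero, zero_add] at h1
  simp only [map_add, map_smul, LinearMap.add_apply, LinearMap.smul_apply]
  rw [← h1, F.comm F.y F.z]

lemma B_LLy_z : F.B (F.L (F.L F.y)) F.z = 0 := by
  have h1 := congrArg (F.B F.y) F.m_y_LLy_add
  simp only [map_add, B_m, map_zero, m_yy] at h1
  rw [F.symm F.z] at h1
  simp only [B_L] at h1
  refine cancel 2 two_ne_zero ?_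
  push_cast
  linear_combination h1

lemma B_z_z : F.B F.z F.z = 0 := by
  have h1 := congrArg (F.B F.y) F.m_y_z_add
  simpa only [map_add, map_smul, B_m, map_zero, m_yy, B_L, B_LLy_z, smul_zero, add_zero] using h1

/-- The derivative of `B z z = 0`. -/
lemma L_m_y_z : F.L (F.m F.y F.z) = 0 := by
  apply F.nondeg
  intro h
  have h1 := F.e_zero F.B_z_z h
  simp only [e_B', d_z, map_smul, smul_eq_mul, B_m, B_L, F.comm F.z] at h1
  refine cancel 8 (by norm_num) ?_
  push_cast
  linear_combination h1

lemma LLLz : F.L (F.L (F.L F.z)) = 0 := by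
  have h1 := congrArg F.L F.m_y_z_add
  rw [L_add, L_m_y_z, L_smul, L_zero, zero_add] at h1
  apply F.nondeg
  intro h
  refine cancel 2 (by norm_num) ?_
  simpa using congrArg (fun v => F.B v h) h1

/-- The derivative of `B (L² y) z = 0`. -/
lemma m_Ly_z_add : F.m (F.L F.y) F.z + F.m F.y (F.L F.z) = 0 := by
  -- `y (L² y) = -L² z`, and `L³ z = 0`
  have hL : F.L (F.m F.y (F.L (F.L F.y))) = 0 := by
    rw [eq_neg_of_add_eq_zero_left F.m_y_LLy_add, L_neg, LLLz, neg_zero]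
  apply F.nondeg
  intro h
  have h1 := F.e_zero F.B_LLy_z h
  simp only [e_B', d_z, d_L, d_y, L_add, L_smul, map_add, map_smul,
    smul_eq_mul, B_m, B_L, LLLz, F.comm _ F.y, hL, map_zero, LinearMap.zero_apply] at h1
  rw [F.comm F.z] at h1
  simp only [map_add, LinearMap.add_apply]
  linear_combination h1

lemma B_Lz_z : F.B (F.L F.z) F.z = 0 := by
  have h1 := congrArg (F.B F.y) F.m_Ly_z_add
  simpa only [map_add, B_m, map_zero, m_y_Ly, LinearMap.zero_apply, m_yy, zero_add, B_L] using h1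

/-- The derivative of `B (L z) z = 0`. -/
lemma L_m_y_Lz_add : (8 : R) • F.L (F.m F.y (F.L F.z)) + F.m F.z F.z = 0 := by
  apply F.nondeg
  intro h
  have h1 := F.e_zero F.B_Lz_z h
  simp only [e_B', d_z, d_L, L_smul, map_add, map_smul, smul_eq_mul, B_m, B_L,
    F.comm _ F.y] at h1
  simp only [map_add, map_smul, LinearMap.add_apply, LinearMap.smul_apply, smul_eq_mul]
  linear_combination h1

lemma B_Lz_Lz : F.B (F.L F.z) (F.L F.z) = 0 := by
  have h1 := congrArg (F.B F.y) F.L_m_y_Lz_add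
  simp only [map_add, map_smul, B_m, B_L, map_zero, F.comm _ F.y, m_y_Ly, LinearMap.zero_apply,
    smul_zero, zero_add] at h1
  have h2 := congrArg (fun v => F.B v F.z) F.m_y_z_add
  simp only [map_add, map_smul, LinearMap.add_apply, LinearMap.smul_apply, h1, map_zero,
    LinearMap.zero_apply, zero_add, smul_eq_mul] at h2
  rw [B_L]
  exact cancel 2 (by norm_num) (by exact_mod_cast h2)

/-! ### The Zhao recursion -/

/-- The vanishing of the Zhao sequence in the abstract setting, where `g k` is the gradient of
`q k` with respect to `B` and `g 1 = y / 2`, as for the gradient of a cubic form. -/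
theorem main [Module ℚ V] (q : ℕ → R) (g : ℕ → V) (hg : ∀ k h, F.e h (q k) = F.B (g k) h)
    (h1 : g 1 = (1 / 2 : ℚ) • F.y)
    (hq : ∀ k, q (k + 2) = ((1 : ℚ) / (2 * (k + 1))) •
      ∑ j ∈ Finset.Icc 1 (k + 1), F.B (g j) (g (k + 2 - j))) (k : ℕ) (hk : 5 ≤ k) : q k = 0 := by
  have Bl (c : ℚ) (a b : V) : F.B (c • a) b = c • F.B a b := map_rat_smul (F.B.flip b) c a
  have Br (c : ℚ) (a b : V) : F.B a (c • b) = c • F.B a b := map_rat_smul (F.B a) c b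
  have el (c : ℚ) (h : V) (a : R) : F.e h (c • a) = c • F.e h a := map_rat_smul (F.e h) c a
  -- nondegeneracy of `B` lets the gradient be read off from directional derivatives
  have key (j : ℕ) (v : V) (hv : ∀ h, F.e h (q j) = F.B v h) : g j = v := by
    rw [← sub_eq_zero]
    apply F.nondeg
    intro h
    rw [map_sub, LinearMap.sub_apply, ← hg, hv, sub_self]
  have hz (j : ℕ) (h0 : q j = 0) : g j = 0 := key j 0 fun h => by simp [h0]
  have two (a : R) : (2 : R) * a = (2 : ℚ) • a := by rw [two_mul, two_smul]
  have four (a : R) : (4 : R) * a = (4 : ℚ) • a := by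
    rw [Algebra.smul_def, map_ofNat]
  have q2 : q 2 = (1 / 8 : ℚ) • F.B F.y F.y := by
    rw [hq 0]
    simp [h1, Br, smul_smul]
    norm_num
  have g2 : g 2 = (1 / 2 : ℚ) • F.L F.y := key _ _ fun h => by
    rw [q2]
    simp only [el, Bl, e_B', d_y, map_smul, B_L, smul_eq_mul, two]
    module
  have q3 : q 3 = (1 / 8 : ℚ) • F.B (F.L F.y) F.y := by
    rw [hq 1]
    simp [Finset.sum_Icc_succ_top, h1, g2, Br, smul_smul, B_L]
    module
  have g3 : g 3 = (1 / 2 : ℚ) • F.L (F.L F.y) + (1 / 8 : ℚ) • F.z := key _ _ fun h => by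
    rw [q3]
    simp only [el, map_add, LinearMap.add_apply, Bl, e_B', d_y, d_L, map_smul, B_L, B_m, L_smul,
      smul_eq_mul, two, m_yy]
    module
  have q4 : q 4 = (1 / 48 : ℚ) • F.B F.y F.z := by
    rw [hq 2]
    simp [Finset.sum_Icc_succ_top, h1, g2, g3, Br, smul_smul, B_L, B_LLy_y, F.symm F.z F.y]
    module
  have g4 : g 4 = (1 / 8 : ℚ) • F.L F.z := key _ _ fun h => by
    rw [q4]
    simp only [el, Bl, e_B', d_y, d_z, map_smul, B_L, B_m, smul_eq_mul, two, four, m_yy]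
    module
  have b23 : F.B (F.L F.y) F.z = 0 := by
    rw [← m_yy, B_m, F.comm, m_y_Ly, map_zero, LinearMap.zero_apply]
  have q5 : q 5 = 0 := by
    rw [hq 3]
    simp [Finset.sum_Icc_succ_top, h1, g2, g3, g4, Br, B_L, L3y, b23, F.symm F.z,
      F.symm (F.L F.z)]
  have g5 := hz 5 q5
  have q6 : q 6 = 0 := by
    rw [hq 4]
    simp [Finset.sum_Icc_succ_top, h1, g2, g3, g4, g5, Br, B_L, nil', B_LLy_z, B_z_z,
      F.symm F.z (F.L (F.L F.y)), F.symm (F.L F.z)]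
  have g6 := hz 6 q6
  have q7 : q 7 = 0 := by
    rw [hq 5]
    simp [Finset.sum_Icc_succ_top, h1, g2, g3, g4, g5, g6, Br, B_L, L3y, B_Lz_z,
      F.symm (F.L F.z) (F.L (F.L F.y))]
  have g7 := hz 7 q7
  have q8 : q 8 = 0 := by
    rw [hq 6]
    simp [Finset.sum_Icc_succ_top, h1, g2, g3, g4, g5, g6, g7, Br, B_Lz_Lz]
  induction k using Nat.strong_induction_on with
  | _ k ih =>
    obtain rfl | rfl | rfl | rfl | h9 : k = 5 ∨ k = 6 ∨ k = 7 ∨ k = 8 ∨ 9 ≤ k := by omega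
    · exact q5
    · exact q6
    · exact q7
    · exact q8
    · obtain ⟨k, rfl⟩ : ∃ l, k = l + 2 := ⟨k - 2, by omega⟩
      rw [hq, Finset.sum_eq_zero, smul_zero]
      intro j hj
      rw [Finset.mem_Icc] at hj
      by_cases h5 : 5 ≤ j
      · rw [hz j (ih j (by omega) h5), map_zero, LinearMap.zero_apply]
      · rw [hz (k + 2 - j) (ih _ (by omega) (by omega)), map_zero]

end Rat

end Frob

/-! ### The cubic form as a Frobenius algebra -/

section Poly

open Matrix
variable {n : ℕ} {K : Type*} [CommRing K]

lemma pderiv_pderiv_comm (i j : Fin n) (f : MvPolynomial (Fin n) K) :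
    pderiv i (pderiv j f) = pderiv j (pderiv i f) := by
  have h : ⁅(pderiv i : Derivation K (MvPolynomial (Fin n) K) (MvPolynomial (Fin n) K)),
      (pderiv j : Derivation K (MvPolynomial (Fin n) K) (MvPolynomial (Fin n) K))⁆ = 0 := by
    refine MvPolynomial.derivation_ext fun k => ?_
    simp [Derivation.commutator_apply, pderiv_X, Pi.single_apply, apply_ite]
  have := congrArg
    (fun D : Derivation K (MvPolynomial (Fin n) K) (MvPolynomial (Fin n) K) => D f) h
  simpa [Derivation.commutator_apply, sub_eq_zero] using this

lemma mkDerivation_eq_dotProduct (h : Fin n → MvPolynomial (Fin n) K)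
    (f : MvPolynomial (Fin n) K) :
    mkDerivation K h f = (fun i => pderiv i f) ⬝ᵥ h := by
  have coe (g : MvPolynomial (Fin n) K) :
      (∑ i, h i • pderiv i : Derivation K (MvPolynomial (Fin n) K) _) g = ∑ i, h i * pderiv i g := by
    change Derivation.coeFnAddMonoidHom _ g = _
    rw [map_sum, Finset.sum_apply]
    rfl
  have e : mkDerivation K h = ∑ i, h i • pderiv i := by
    refine MvPolynomial.derivation_ext fun k => ?_
    rw [coe]
    simp [mkDerivation_X, pderiv_X, Pi.single_apply]
  rw [e, coe]
  simp [dotProduct, mul_comm]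

/-- The third partial derivatives `DₖDᵢDⱼP`, the structure constants of the algebra of `P`. -/
noncomputable def third (P : MvPolynomial (Fin n) K) (i j k : Fin n) : MvPolynomial (Fin n) K :=
  pderiv k (pderiv i (pderiv j P))

lemma third_swap (P : MvPolynomial (Fin n) K) (i j k : Fin n) : third P i j k = third P i k j := by
  rw [third, third, pderiv_pderiv_comm k i, pderiv_pderiv_comm k j, pderiv_pderiv_comm i j]

lemma third_swap' (P : MvPolynomial (Fin n) K) (i j k : Fin n) :
    third P i j k = third P j i k := by
  rw [third, third, pderiv_pderiv_comm i j]

/-- The product `(a * b)ᵢ = ∑ⱼₖ (DᵢDⱼDₖP) aₖ bⱼ` on vectors of polynomials. -/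
noncomputable def thirdMul (P : MvPolynomial (Fin n) K) :
    (Fin n → MvPolynomial (Fin n) K) →ₗ[MvPolynomial (Fin n) K]
    (Fin n → MvPolynomial (Fin n) K) →ₗ[MvPolynomial (Fin n) K]
    (Fin n → MvPolynomial (Fin n) K) :=
  LinearMap.mk₂ _ (fun a b i => ∑ j, ∑ k, third P i j k * (a k * b j))
    (fun a a' b => by ext1 i; simp [add_mul, mul_add, Finset.sum_add_distrib])
    (fun c a b => by
      ext1 i
      simp only [Pi.smul_apply, smul_eq_mul, Finset.mul_sum]
      exact Finset.sum_congr rfl fun j _ => Finset.sum_congr rfl fun k _ => by ring)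
    (fun a b b' => by ext1 i; simp [mul_add, Finset.sum_add_distrib])
    (fun c a b => by
      ext1 i
      simp only [Pi.smul_apply, smul_eq_mul, Finset.mul_sum]
      exact Finset.sum_congr rfl fun j _ => Finset.sum_congr rfl fun k _ => by ring)

lemma thirdMul_apply (P : MvPolynomial (Fin n) K) (a b : Fin n → MvPolynomial (Fin n) K) (i) :
    thirdMul P a b i = ∑ j, ∑ k, third P i j k * (a k * b j) := rfl

/-- Euler's identity for the second derivatives of `P`, which are linear forms. -/
lemma thirdMul_X (P : MvPolynomial (Fin n) K) (hP : P.IsHomogeneous 3)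
    (b : Fin n → MvPolynomial (Fin n) K) :
    thirdMul P X b = hessian P *ᵥ b := by
  ext1 i
  rw [thirdMul_apply]
  refine Finset.sum_congr rfl fun j _ => ?_
  have := (hP.pderiv (i := j)).pderiv (i := i) |>.sum_X_mul_pderiv
  simp only [Nat.reduceSub, one_smul] at this
  change _ = pderiv i (pderiv j P) * b j
  rw [← this, Finset.sum_mul]
  exact Finset.sum_congr rfl fun k _ => by rw [third]; ring

/-- Euler's identity for the first derivatives of `P`, which are quadratic forms. -/
lemma hessian_X (P : MvPolynomial (Fin n) K) (hP : P.IsHomogeneous 3) (i : Fin n) :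
    (hessian P *ᵥ X) i = 2 * pderiv i P := by
  have := (hP.pderiv (i := i)).sum_X_mul_pderiv
  simp only [Nat.reduceSub, nsmul_eq_mul] at this
  push_cast at this
  rw [← this]
  change ∑ k, pderiv i (pderiv k P) * X k = _
  refine Finset.sum_congr rfl fun k _ => ?_
  rw [pderiv_pderiv_comm, mul_comm]

lemma mkDerivation_third (P : MvPolynomial (Fin n) K) (hP : P.IsHomogeneous 3)
    (h : Fin n → MvPolynomial (Fin n) K) (i j k) : mkDerivation K h (third P i j k) = 0 := by
  have h0 : (third P i j k).IsHomogeneous 0 :=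
    ((hP.pderiv (i := j)).pderiv (i := i)).pderiv (i := k)
  rw [totalDegree_eq_zero_iff_eq_C.1 (Nat.le_zero.1 h0.totalDegree_le)]
  exact derivation_C _ _

/-- The algebra attached to a cubic form `P` with `(Hess P)⁴ = 0`: the product has the third
derivatives of `P` as structure constants, the form is the dot product, and the generic point is
`X = (X₁, …, Xₙ)`. -/
noncomputable def frob (P : MvPolynomial (Fin n) K) (hP : P.IsHomogeneous 3)
    (hnil : hessian P ^ 4 = 0) :
    Frob (MvPolynomial (Fin n) K) (Fin n → MvPolynomial (Fin n) K) where
  m := thirdMul P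
  B := dotProductBilin _ _
  comm a b := by
    ext1 i
    rw [thirdMul_apply, thirdMul_apply, Finset.sum_comm]
    exact Finset.sum_congr rfl fun j _ => Finset.sum_congr rfl fun k _ => by
      rw [third_swap, mul_comm (a j)]
  symm a b := dotProduct_comm a b
  assoc a b c := by
    change thirdMul P a b ⬝ᵥ c = a ⬝ᵥ thirdMul P b c
    simp only [dotProduct, thirdMul_apply, Finset.mul_sum, Finset.sum_mul]
    -- both sides are the trilinear form `∑ (DᵢDⱼDₖP) cᵢ bⱼ aₖ`
    rw [Finset.sum_congr rfl fun i _ => Finset.sum_comm, Finset.sum_comm]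
    exact Finset.sum_congr rfl fun k _ => Finset.sum_congr rfl fun i _ =>
      Finset.sum_congr rfl fun j _ => by
        rw [third_swap P i j k, third_swap' P i k j]; ring
  nondeg a ha := dotProduct_eq_zero a ha
  x := X
  d h :=
    { toFun := fun v i => mkDerivation K h (v i)
      map_zero' := by ext1 i; simp
      map_add' := fun a b => by ext1 i; simp }
  e h := (mkDerivation K h : Derivation K _ _).toLinearMap.toAddMonoidHom
  d_x h := by ext1 i; exact mkDerivation_X _ _ _
  d_m h a b := by
    ext1 i
    simp [thirdMul_apply, mkDerivation_third P hP, ← Finset.sum_add_distrib]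
    exact Finset.sum_congr rfl fun j _ => Finset.sum_congr rfl fun k _ => by ring
  e_B h a b := by
    change mkDerivation K h (a ⬝ᵥ b) = _ ⬝ᵥ b + a ⬝ᵥ _
    simp only [dotProduct, map_sum, Derivation.leibniz, smul_eq_mul, ← Finset.sum_add_distrib]
    exact Finset.sum_congr rfl fun j _ => by
      simp; ring
  nil a := by
    simp only [thirdMul_X P hP, mulVec_mulVec]
    rw [show hessian P * (hessian P * (hessian P * hessian P)) = hessian P ^ 4 by
      noncomm_ring, hnil, zero_mulVec]

end Poly

/-- if `P` is homogeneous cubic with `(Hess P)⁴ = 0`, then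
`Q⁽ᵐ⁾ = 0` for all `m ≥ 5`. -/
theorem zhaoSeq_eq_zero_of_cubic_hessian_fourth_power_zero
    {n : ℕ} {K : Type*} [CommRing K] [Algebra ℚ K]
    (P : MvPolynomial (Fin n) K) (hP : P.IsHomogeneous 3)
    (hnil : hessian P ^ 4 = 0) :
    ∀ m : ℕ, 5 ≤ m → zhaoSeq P m = 0 := by
  refine (frob P hP hnil).main (zhaoSeq P) (fun k i => pderiv i (zhaoSeq P k))
    (fun k h => mkDerivation_eq_dotProduct h _) ?_ ?_
  · change _ = (1 / 2 : ℚ) • thirdMul P X X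
    rw [thirdMul_X P hP]
    ext1 i
    rw [Pi.smul_apply, hessian_X P hP, two_mul, ← two_smul ℚ, smul_smul, zhaoSeq]
    norm_num
  · intro k
    rw [zhaoSeq]
    congr 1
    exact Finset.sum_attach (Finset.Icc 1 (k + 1)) fun j =>
      (fun i => pderiv i (zhaoSeq P j)) ⬝ᵥ fun i => pderiv i (zhaoSeq P (k + 2 - j))
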